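/- Let (D ⊆ A, E) be a D-valued probability space and let a, b ∈ A be such that {a, a*} and {b, b*} are free with amalgamation over D and a is R-diagonal with amalgamation over D. Then both ab and ba are R-diagonal with amalgamation over D. -/

import Mathlib

/-!
The element `c = a b` has alternating words `a b d b* a* d' a b ⋯`. Once an initial `a`
and a final `a*` (if present) are split off, the rest is an element of the algebra generated by
`alg(b, b*, D)` and by the algebra `G` of the words `a* d a d' a* d'' a ⋯`. By the usual reduction this algebra is
`D` plus the span of alternating products of centred elements of `alg(b, b*, D)` and of `G`
(`mul_mem_reduced`). Multiplying an element of `G` by an outer `a` on the left or `a*` on the right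
gives an element of one of the spaces `P i j` of `a`. Consequently every element of the space
`P i j` of `a b` is a combination of *chains* (`Chain`): products of centred elements of
`alg(b, b*, D)` and of elements of the spaces `P i j` of `a`, in which two neighbours are never both
from `alg(b, b*, D)`, and two neighbouring `P`'s have matching indices (`pset_mul_le`). The possible
ends of these chains are such that a product of elements of matching spaces of `a b` is again a
combination of chains (`chainSpan_mul`).

A chain has expectation zero (`Chain.expect_eq_zero`): R-diagonality of `a` says that each maximal
run of `P`'s is a centred element of `alg(a, a*, D)`, so that freeness applies.

R-diagonality is invariant under the adjoint, which exchanges the two indices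
(`RDiagWithAmalg.star`). Since `b a = (a* b*)*`, the statement for `b a` follows from the one for
the pair `a*`, `b*`.
-/

noncomputable section

variable {A : Type*}

section Scaffold
variable [Ring A] [Algebra ℂ A] [StarRing A] [StarModule ℂ A]

/-- A faithful tracial state on a unital complex `⋆`-algebra. -/
structure IsFaithfulTracialState (φ : A →ₗ[ℂ] ℂ) : Prop where
  unital : φ 1 = 1
  positive : ∀ a : A, 0 ≤ (φ (star a * a)).re ∧ (φ (star a * a)).im = 0
  tracial : ∀ a b : A, φ (a * b) = φ (b * a)
  faithful : ∀ a : A, φ (star a * a) = 0 → a = 0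

/-- `E` is a conditional expectation onto the subalgebra with underlying set `D`. -/
def IsCondExp (D : Set A) (E : A →ₗ[ℂ] A) : Prop :=
  E 1 = 1 ∧ (∀ x : A, E x ∈ D) ∧
    ∀ d₁ ∈ D, ∀ d₂ ∈ D, ∀ x : A, E (d₁ * x * d₂) = d₁ * E x * d₂

/-- `letter a true = a`, `letter a false = star a`. -/
def letter (a : A) : Bool → A := fun b => if b then a else star a

/-- Words `d₀ · a^{s₁} · d₁ · a^{s₂} · ⋯ · a^{sₖ} · dₖ` with the `dᵢ` running over `D`
and the pattern of letters (`true` for `a`, `false` for `star a`) given by the list. -/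
def wordSet (D : Set A) (a : A) : List Bool → Set A
  | [] => D
  | b :: rest => {x | ∃ d ∈ D, ∃ w ∈ wordSet D a rest, x = d * letter a b * w}

/-- The alternating list of length `n` starting with `b`. -/
def altList : Bool → ℕ → List Bool
  | _, 0 => []
  | b, n + 1 => b :: altList (!b) n

/-- The sets `P₁₁, P₁₂, P₂₁, P₂₂` associated to `a` (indices `0,1` standing for `1,2`). -/
def Pset (D : Set A) (E : A →ₗ[ℂ] A) (a : A) : Fin 2 → Fin 2 → Set A :=
  ![![↑(Submodule.span ℂ (⋃ m : ℕ, wordSet D a (altList false (2 * m + 1)))),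
     {x | x ∈ Submodule.span ℂ (⋃ m : ℕ, wordSet D a (altList false (2 * m))) ∧ E x = 0}],
    ![{x | x ∈ Submodule.span ℂ (⋃ m : ℕ, wordSet D a (altList true (2 * m))) ∧ E x = 0},
     ↑(Submodule.span ℂ (⋃ m : ℕ, wordSet D a (altList true (2 * m + 1))))]]

/-- `a` is `R`-diagonal with amalgamation over `D` (w.r.t. the conditional expectation `E`). -/
def RDiagWithAmalg (D : Set A) (E : A →ₗ[ℂ] A) (a : A) : Prop :=
  ∀ n : ℕ, 0 < n → ∀ (i : Fin (n + 1) → Fin 2) (x : Fin n → A),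
    (∀ k : Fin n, x k ∈ Pset D E a (i k.castSucc) (i k.succ)) →
    E (List.ofFn x).prod = 0

/-- `x` and `y` are identically `D`-distributed:
`E(x^{s₁} d₁ x^{s₂} d₂ ⋯ d_{n−1} x^{sₙ}) = E(y^{s₁} d₁ ⋯ d_{n−1} y^{sₙ})`. -/
def IdentDistrib (D : Set A) (E : A →ₗ[ℂ] A) (x y : A) : Prop :=
  ∀ n : ℕ, 0 < n → ∀ (s : Fin n → Bool) (d : Fin n → A), (∀ i, d i ∈ D) →
    E (List.ofFn fun i : Fin n =>
        letter x (s i) * (if i.val + 1 < n then d i else 1)).prod =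
    E (List.ofFn fun i : Fin n =>
        letter y (s i) * (if i.val + 1 < n then d i else 1)).prod

/-- A family of subsets of `A` is free with amalgamation over `D`. -/
def FreeAmalg (D : Set A) (E : A →ₗ[ℂ] A) {ι : Type*} (X : ι → Set A) : Prop :=
  ∀ n : ℕ, 0 < n → ∀ (s : Fin n → ι) (x : Fin n → A),
    (∀ k : Fin n, x k ∈ Algebra.adjoin ℂ (X (s k) ∪ D)) →
    (∀ (k : Fin n) (h : k.val + 1 < n), s k ≠ s ⟨k.val + 1, h⟩) →
    (∀ k : Fin n, E (x k) = 0) →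
    E (List.ofFn x).prod = 0

/-- A scalar random variable: normal, commutes with `D`, with scalar `D`-moments. -/
def IsScalarRV (D : Set A) (E : A →ₗ[ℂ] A) (y : A) : Prop :=
  y * star y = star y * y ∧
  (∀ d ∈ D, d * y = y * d ∧ d * star y = star y * d) ∧
  ∀ k l : ℕ, ∃ c : ℂ, E (y ^ k * (star y) ^ l) = algebraMap ℂ A c

end Scaffold

/-- The scalars `ℂ·1` inside `A`. -/
def scalarD (A : Type*) [Ring A] [Algebra ℂ A] : Set A := Set.range (algebraMap ℂ A)

section Scaffold2
variable [Ring A] [Algebra ℂ A] [StarRing A] [StarModule ℂ A]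

/-- The conditional expectation `x ↦ φ(x)·1` associated to a state `φ`. -/
def scalarE (φ : A →ₗ[ℂ] ℂ) : A →ₗ[ℂ] A := (Algebra.linearMap ℂ A).comp φ

/-- `a` is (scalar) `R`-diagonal with respect to `φ`. -/
def RDiag (φ : A →ₗ[ℂ] ℂ) (a : A) : Prop :=
  RDiagWithAmalg (scalarD A) (scalarE φ) a

/-- A family of subsets of `A` is free with respect to the state `φ`. -/
def FreeScalar (φ : A →ₗ[ℂ] ℂ) {ι : Type*} (X : ι → Set A) : Prop :=
  FreeAmalg (scalarD A) (scalarE φ) X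

/-- `a^1 = a`, `a^{-1} = star a`. -/
def sgnPow (a : A) (t : ℤ) : A := if t = 1 then a else star a

/-- The set of balanced words in `a, star a`. -/
def balancedWords (a : A) : Set A :=
  {w | ∃ (n : ℕ) (_ : 0 < n) (t : Fin n → ℤ),
    (∀ i, t i = 1 ∨ t i = -1) ∧
    (∑ i, t i) = 0 ∧
    (∀ j : ℕ, 0 < j → j < n →
      (∑ i ∈ Finset.univ.filter (fun i : Fin n => i.val < j), t i) ≤ 0) ∧
    w = (List.ofFn fun i : Fin n => sgnPow a (t i)).prod}

/-- The algebra `K_a`: the span of balanced words. -/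
def Kset (a : A) : Set A := ↑(Submodule.span ℂ (balancedWords a))

end Scaffold2

end
namespace RDiagMul

/-! ### Alternating products, runs and chains -/

section Combinatorics

variable {A : Type*} [Ring A]

/-- Products `x₁ ⋯ xₙ`, `n ≥ 1`, with `xₖ ∈ C sₖ` and `sₖ ≠ sₖ₊₁`; the indices are `s₁` and
`sₙ`. -/
inductive Alt (C : Fin 2 → Set A) : Fin 2 → Fin 2 → A → Prop
  | single {s x} : x ∈ C s → Alt C s s x
  | cons {s s' t x z} : x ∈ C s → s ≠ s' → Alt C s' t z → Alt C s t (x * z)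

/-- Products `x₁ ⋯ xₙ`, `n ≥ 1`, with `xₖ ∈ P iₖ iₖ₊₁`; the indices are `i₁` and `iₙ₊₁`. -/
inductive Run (P : Fin 2 → Fin 2 → Set A) : Fin 2 → Fin 2 → A → Prop
  | single {i j x} : x ∈ P i j → Run P i j x
  | cons {i j k x z} : x ∈ P i j → Run P j k z → Run P i k (x * z)

/-- Whether a factor with right label `t` may be followed by one with left label `s`. The label
`none` stands for a factor from the free algebra, `some i` for the index `i` of a factor from
`P`. -/
def Link : Option (Fin 2) → Option (Fin 2) → Prop
  | none, none => False
  | some i, some j => i = j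
  | _, _ => True

/-- Nonempty products of factors from `Y` and from the sets `P i j`, neighbours being compatible in
the sense of `Link`; the indices are the left label of the first factor and the right label of the
last one. -/
inductive Chain (P : Fin 2 → Fin 2 → Set A) (Y : Set A) :
    Option (Fin 2) → Option (Fin 2) → A → Prop
  | free {y} : y ∈ Y → Chain P Y none none y
  | diag {i j x} : x ∈ P i j → Chain P Y (some i) (some j) x
  | consFree {y i t x} : y ∈ Y → Chain P Y (some i) t x → Chain P Y none t (y * x)
  | consDiag {x i j s t z} : x ∈ P i j → Link (some j) s → Chain P Y s t z →
      Chain P Y (some i) t (x * z)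

lemma Chain.mul {P : Fin 2 → Fin 2 → Set A} {Y : Set A} {s t s' t' : Option (Fin 2)} {x z : A}
    (hx : Chain P Y s t x) (hz : Chain P Y s' t' z) (h : Link t s') :
    Chain P Y s t' (x * z) := by
  induction hx with
  | free hy =>
    cases s' with
    | none => exact h.elim
    | some i => exact .consFree hy hz
  | diag hx => exact .consDiag hx h hz
  | consFree hy _ ih => rw [mul_assoc]; exact .consFree hy (ih h)
  | consDiag hx hl _ ih => rw [mul_assoc]; exact .consDiag hx hl (ih h)

lemma Alt.exists_ofFn {C : Fin 2 → Set A} {s t : Fin 2} {x : A} (h : Alt C s t x) :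
    ∃ (n : ℕ) (σ : Fin (n + 1) → Fin 2) (y : Fin (n + 1) → A), σ 0 = s ∧
      (∀ k, y k ∈ C (σ k)) ∧
      (∀ (k : Fin (n + 1)) (h : k.val + 1 < n + 1), σ k ≠ σ ⟨k.val + 1, h⟩) ∧
      (List.ofFn y).prod = x := by
  induction h with
  | @single s x hx =>
    refine ⟨0, fun _ => s, fun _ => x, rfl, fun _ => hx, fun k h => ?_, by simp⟩
    omega
  | @cons s s' t x z hx hs _ ih =>
    obtain ⟨n, σ, y, h0, hy, hσ, rfl⟩ := ih
    refine ⟨n + 1, Fin.cons s σ, Fin.cons x y, rfl, fun k => ?_, fun k h => ?_, ?_⟩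
    · refine Fin.cases ?_ (fun k => ?_) k
      · simpa using hx
      · simpa using hy k
    · revert h
      refine Fin.cases ?_ (fun k => ?_) k
      · intro h
        have : (⟨(0 : Fin (n + 1 + 1)).val + 1, h⟩ : Fin (n + 2)) = Fin.succ 0 := rfl
        rw [this, Fin.cons_zero, Fin.cons_succ, h0]
        exact hs
      · intro h
        have h' : k.val + 1 < n + 1 := by simpa using h
        have : (⟨k.succ.val + 1, h⟩ : Fin (n + 2)) = Fin.succ ⟨k.val + 1, h'⟩ := rfl
        rw [this, Fin.cons_succ, Fin.cons_succ]
        exact hσ k h'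
    · simp [List.ofFn_succ]

lemma Run.exists_ofFn {P : Fin 2 → Fin 2 → Set A} {i j : Fin 2} {x : A} (h : Run P i j x) :
    ∃ (n : ℕ) (ι : Fin (n + 2) → Fin 2) (y : Fin (n + 1) → A), ι 0 = i ∧
      (∀ k : Fin (n + 1), y k ∈ P (ι k.castSucc) (ι k.succ)) ∧ (List.ofFn y).prod = x := by
  induction h with
  | @single i j x hx =>
    refine ⟨0, ![i, j], fun _ => x, rfl, fun k => ?_, by simp⟩
    fin_cases k
    simpa using hx
  | @cons i j k x z hx _ ih =>
    obtain ⟨n, ι, y, h0, hy, rfl⟩ := ih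
    refine ⟨n + 1, Fin.cons i ι, Fin.cons x y, rfl, fun k => ?_, by simp [List.ofFn_succ]⟩
    refine Fin.cases ?_ (fun k => ?_) k
    · simpa [h0] using hx
    · simpa [← Fin.succ_castSucc] using hy k

/-- Collecting the maximal runs of factors from `P` turns a chain into an alternating product. The
statement keeps a leading run separate, so that further factors can be put in front of it. -/
lemma Chain.collect {P : Fin 2 → Fin 2 → Set A} {Y : Set A} {C : Fin 2 → Set A}
    (hY : Y ⊆ C 1) (hP : ∀ i j x, Run P i j x → x ∈ C 0)
    {s t : Option (Fin 2)} {x : A} (h : Chain P Y s t x) :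
    (s = none → ∃ u, Alt C 1 u x) ∧
    (∀ i, s = some i → (∃ j, Run P i j x) ∨
      ∃ j r z u, Run P i j r ∧ Alt C 1 u z ∧ x = r * z) := by
  induction h with
  | free hy => exact ⟨fun _ => ⟨1, .single (hY hy)⟩, by simp⟩
  | @diag i j x hx =>
    refine ⟨by simp, fun k hk => ?_⟩
    obtain rfl := Option.some.inj hk
    exact .inl ⟨j, .single hx⟩
  | @consFree y i t x hy _ ih =>
    refine ⟨fun _ => ?_, by simp⟩
    rcases ih.2 i rfl with ⟨j, hr⟩ | ⟨j, r, z, u, hr, hz, rfl⟩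
    · exact ⟨0, .cons (hY hy) (by decide) (.single (hP _ _ _ hr))⟩
    · exact ⟨u, .cons (hY hy) (by decide) (.cons (hP _ _ _ hr) (by decide) hz)⟩
  | @consDiag x i j s t z hx hl _ ih =>
    refine ⟨by simp, fun k hk => ?_⟩
    obtain rfl := Option.some.inj hk
    cases s with
    | none =>
      obtain ⟨u, hu⟩ := ih.1 rfl
      exact .inr ⟨j, x, z, u, .single hx, hu, rfl⟩
    | some j' =>
      obtain rfl : j = j' := hl
      rcases ih.2 j rfl with ⟨k, hr⟩ | ⟨k, r, z, u, hr, hz, rfl⟩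
      · exact .inl ⟨k, .cons hx hr⟩
      · exact .inr ⟨k, x * r, z, u, .cons hx hr, hz, (mul_assoc _ _ _).symm⟩

lemma altList_append (b : Bool) (n k : ℕ) :
    altList b n ++ altList (not^[n] b) k = altList b (n + k) := by
  induction n generalizing b with
  | zero => simp [altList]
  | succ n ih =>
    rw [Nat.add_right_comm]
    simp [altList, ih]

end Combinatorics

/-! ### Alternating words with coefficients in `D` -/

section Words

variable {A : Type*} [Ring A] [Algebra ℂ A] [StarRing A] [StarModule ℂ A]
  {D : StarSubalgebra ℂ A} {a : A}

lemma D_mul_wordSet {d x : A} (hd : d ∈ D) {l : List Bool}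
    (hx : x ∈ wordSet (D : Set A) a l) : d * x ∈ wordSet (D : Set A) a l := by
  cases l with
  | nil => exact mul_mem hd hx
  | cons c l =>
    obtain ⟨e, he, w, hw, rfl⟩ := hx
    exact ⟨d * e, mul_mem hd he, w, hw, by simp only [mul_assoc]⟩

lemma wordSet_mul {l l' : List Bool} {x y : A} (hx : x ∈ wordSet (D : Set A) a l)
    (hy : y ∈ wordSet (D : Set A) a l') : x * y ∈ wordSet (D : Set A) a (l ++ l') := by
  induction l generalizing x with
  | nil => exact D_mul_wordSet hx hy
  | cons c l ih =>
    obtain ⟨e, he, w, hw, rfl⟩ := hx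
    exact ⟨e, he, w * y, ih hw, by simp only [mul_assoc]⟩

lemma wordSet_subset_adjoin (l : List Bool) :
    wordSet (D : Set A) a l ⊆ Algebra.adjoin ℂ (({a, star a} : Set A) ∪ D) := by
  induction l with
  | nil => exact fun x hx => Algebra.subset_adjoin (.inr hx)
  | cons c l ih =>
    rintro x ⟨e, he, w, hw, rfl⟩
    refine mul_mem (mul_mem (Algebra.subset_adjoin (.inr he)) (Algebra.subset_adjoin (.inl ?_)))
      (ih hw)
    cases c <;> simp [letter]

/-- The span of the alternating words in `a`, `a*` that start with `letter a c` and whose length is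
congruent to `r` modulo 2 (for `r = 0, 1`). -/
def V (D : StarSubalgebra ℂ A) (a : A) (c : Bool) (r : ℕ) : Submodule ℂ A :=
  Submodule.span ℂ (⋃ m : ℕ, wordSet (D : Set A) a (altList c (2 * m + r)))

lemma mem_V {c : Bool} {r : ℕ} (m : ℕ) {x : A}
    (hx : x ∈ wordSet (D : Set A) a (altList c (2 * m + r))) : x ∈ V D a c r :=
  Submodule.subset_span (Set.mem_iUnion.2 ⟨m, hx⟩)

lemma D_mem_V {c : Bool} {d : A} (hd : d ∈ D) : d ∈ V D a c 0 := mem_V 0 hd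

lemma V_mul {c c' : Bool} {r r' q k : ℕ} (hc : not^[r] c = c') (hq : r + r' = 2 * k + q) {x y : A}
    (hx : x ∈ V D a c r) (hy : y ∈ V D a c' r') : x * y ∈ V D a c q := by
  have h := Submodule.mul_mem_mul hx hy
  rw [V, V, Submodule.span_mul_span] at h
  refine Submodule.span_le.2 ?_ h
  rintro _ ⟨x, hx, y, hy, rfl⟩
  obtain ⟨m, hx⟩ := Set.mem_iUnion.1 hx
  obtain ⟨m', hy⟩ := Set.mem_iUnion.1 hy
  have hcc : not^[2 * m + r] c = c' := by
    have h2 : not^[2] = id := by ext b; cases b <;> rfl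
    rw [add_comm, Function.iterate_add_apply, Function.iterate_mul, h2, Function.iterate_id, id, hc]
  have := wordSet_mul hx hy
  rw [← hcc, altList_append] at this
  refine mem_V (m + m' + k) ?_
  rwa [show 2 * (m + m' + k) + q = 2 * m + r + (2 * m' + r') by omega]

lemma V_even_mul_even {x y : A} (hx : x ∈ V D a false 0) (hy : y ∈ V D a false 0) :
    x * y ∈ V D a false 0 :=
  V_mul (r := 0) (r' := 0) (q := 0) (k := 0) rfl rfl hx hy

lemma V_even_mul_odd {x y : A} (hx : x ∈ V D a false 0) (hy : y ∈ V D a false 1) :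
    x * y ∈ V D a false 1 :=
  V_mul (r := 0) (r' := 1) (q := 1) (k := 0) rfl rfl hx hy

lemma V_odd_mul_even {x y : A} (hx : x ∈ V D a true 1) (hy : y ∈ V D a false 0) :
    x * y ∈ V D a true 1 :=
  V_mul (r := 1) (r' := 0) (q := 1) (k := 0) rfl rfl hx hy

lemma V_odd_mul_odd {x y : A} (hx : x ∈ V D a true 1) (hy : y ∈ V D a false 1) :
    x * y ∈ V D a true 0 :=
  V_mul (r := 1) (r' := 1) (q := 0) (k := 1) rfl rfl hx hy

lemma D_mul_a_mem {d : A} (hd : d ∈ D) : d * a ∈ V D a true 1 :=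
  mem_V 0 ⟨d, hd, 1, one_mem D, by simp [letter]⟩

lemma star_a_mul_D_mem {d : A} (hd : d ∈ D) : star a * d ∈ V D a false 1 :=
  mem_V 0 ⟨1, one_mem D, d, hd, by simp [letter]⟩

lemma star_a_D_a_mem {d : A} (hd : d ∈ D) : star a * d * a ∈ V D a false 0 :=
  mem_V 1 ⟨1, one_mem D, d * a, ⟨d, hd, 1, one_mem D, by simp [letter]⟩,
    by simp [letter, mul_assoc]⟩

lemma V_le_adjoin (c : Bool) (r : ℕ) :
    V D a c r ≤ Subalgebra.toSubmodule (Algebra.adjoin ℂ (({a, star a} : Set A) ∪ D)) :=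
  Submodule.span_le.2 (Set.iUnion_subset fun _ => wordSet_subset_adjoin _)

lemma Pset_zero_zero {E : A →ₗ[ℂ] A} : Pset (D : Set A) E a 0 0 = V D a false 1 := rfl
lemma Pset_zero_one {E : A →ₗ[ℂ] A} :
    Pset (D : Set A) E a 0 1 = {x | x ∈ V D a false 0 ∧ E x = 0} := rfl
lemma Pset_one_zero {E : A →ₗ[ℂ] A} :
    Pset (D : Set A) E a 1 0 = {x | x ∈ V D a true 0 ∧ E x = 0} := rfl
lemma Pset_one_one {E : A →ₗ[ℂ] A} : Pset (D : Set A) E a 1 1 = V D a true 1 := rfl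

lemma Pset_subset_adjoin {E : A →ₗ[ℂ] A} (i j : Fin 2) :
    Pset (D : Set A) E a i j ⊆ Algebra.adjoin ℂ (({a, star a} : Set A) ∪ D) := by
  fin_cases i <;> fin_cases j
  · exact V_le_adjoin false 1
  · exact fun x hx => V_le_adjoin false 0 hx.1
  · exact fun x hx => V_le_adjoin true 0 hx.1
  · exact V_le_adjoin true 1

end Words

/-! ### Reduction of inner products -/

section Expectation

variable {A : Type*} [Ring A] [Algebra ℂ A] [StarRing A] [StarModule ℂ A]
  {D : StarSubalgebra ℂ A} {E : A →ₗ[ℂ] A} {a b : A}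

lemma E_mul_left (hE : IsCondExp (D : Set A) E) {d : A} (hd : d ∈ D) (x : A) :
    E (d * x) = d * E x := by
  simpa using hE.2.2 d hd 1 (one_mem D) x

lemma E_of_mem (hE : IsCondExp (D : Set A) E) {d : A} (hd : d ∈ D) : E d = d := by
  simpa [hE.1] using E_mul_left hE hd 1

lemma E_sub (hE : IsCondExp (D : Set A) E) (x : A) : E (x - E x) = 0 := by
  rw [map_sub, E_of_mem hE (hE.2.1 x), sub_self]

/-- The centred elements of the members of a family of subspaces. -/
def centred (E : A →ₗ[ℂ] A) (B : Fin 2 → Submodule ℂ A) (s : Fin 2) : Set A :=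
  {x | x ∈ B s ∧ E x = 0}

/-- The sum of `D` and the span of all alternating products of centred elements. -/
def reduced (D : StarSubalgebra ℂ A) (E : A →ₗ[ℂ] A) (B : Fin 2 → Submodule ℂ A) :
    Submodule ℂ A :=
  Subalgebra.toSubmodule D.toSubalgebra ⊔
    Submodule.span ℂ {x | ∃ s t, Alt (centred E B) s t x}

lemma D_mem_reduced {B : Fin 2 → Submodule ℂ A} {d : A} (hd : d ∈ D) : d ∈ reduced D E B :=
  Submodule.mem_sup_left hd

lemma alt_mem_reduced {B : Fin 2 → Submodule ℂ A} {s t : Fin 2} {x : A}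
    (hx : Alt (centred E B) s t x) : x ∈ reduced D E B :=
  Submodule.mem_sup_right (Submodule.subset_span ⟨s, t, hx⟩)

/-- The reduction of products: for subspaces `B 0`, `B 1` that contain `D` and are closed under
multiplication, the space `reduced` is stable under left multiplication by `B 0` and `B 1`. -/
lemma mul_mem_reduced (hE : IsCondExp (D : Set A) E) {B : Fin 2 → Submodule ℂ A}
    (hD : ∀ s, ∀ d ∈ D, d ∈ B s) (hmul : ∀ s, ∀ x ∈ B s, ∀ y ∈ B s, x * y ∈ B s)
    {s : Fin 2} {u x : A} (hu : u ∈ B s) (hx : x ∈ reduced D E B) :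
    u * x ∈ reduced D E B := by
  have hcent : ∀ {s u}, u ∈ B s → u - E u ∈ centred E B s := fun {s u} hu =>
    ⟨sub_mem hu (hD _ _ (hE.2.1 u)), E_sub hE u⟩
  have hDalt : ∀ {d s t x}, d ∈ D → Alt (centred E B) s t x →
      Alt (centred E B) s t (d * x) := by
    have hd1 : ∀ {d s x}, d ∈ D → x ∈ centred E B s → d * x ∈ centred E B s :=
      fun {d s x} hd hx => ⟨hmul _ _ (hD _ _ hd) _ hx.1, by
        rw [E_mul_left hE hd, hx.2, mul_zero]⟩
    intro d s t x hd hx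
    cases hx with
    | single hx => exact .single (hd1 hd hx)
    | cons hx hs hz => rw [← mul_assoc]; exact .cons (hd1 hd hx) hs hz
  have hone : ∀ {s u}, u ∈ B s → u ∈ reduced D E B := fun {s u} hu => by
    rw [← add_sub_cancel (E u) u]
    exact add_mem (D_mem_reduced (hE.2.1 u)) (alt_mem_reduced (.single (hcent hu)))
  have hne : ∀ {s s' t u z}, u ∈ B s → s ≠ s' → Alt (centred E B) s' t z →
      u * z ∈ reduced D E B := fun {s s' t u z} hu hs hz => by
    rw [← add_sub_cancel (E u) u, add_mul]
    exact add_mem (alt_mem_reduced (hDalt (hE.2.1 u) hz))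
      (alt_mem_reduced (.cons (hcent hu) hs hz))
  suffices reduced D E B ≤ (reduced D E B).comap (LinearMap.mulLeft ℂ u) from this hx
  refine sup_le (fun d hd => ?_) (Submodule.span_le.2 ?_)
  · exact hone (hmul _ _ hu _ (hD _ _ hd))
  · rintro x ⟨s', t, hx⟩
    change u * x ∈ reduced D E B
    by_cases hs : s = s'
    · subst hs
      cases hx with
      | single hx => exact hone (hmul _ _ hu _ hx.1)
      | cons hx hs hz => rw [← mul_assoc]; exact hne (hmul _ _ hu _ hx.1) hs hz
    · exact hne hu hs hx

/-! ### Chains have expectation zero -/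

/-- The centred elements of the algebra generated by `b`, `b*` and `D`. -/
def freePart (D : StarSubalgebra ℂ A) (E : A →ₗ[ℂ] A) (b : A) : Set A :=
  {y | y ∈ Algebra.adjoin ℂ (({b, star b} : Set A) ∪ D) ∧ E y = 0}

lemma Run.expect_eq_zero (ha : RDiagWithAmalg (D : Set A) E a) {i j : Fin 2} {x : A}
    (h : Run (Pset (D : Set A) E a) i j x) : E x = 0 := by
  obtain ⟨n, ι, y, -, hy, rfl⟩ := h.exists_ofFn
  exact ha (n + 1) n.succ_pos ι y hy

lemma Run.mem_adjoin {i j : Fin 2} {x : A}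
    (h : Run (Pset (D : Set A) E a) i j x) :
    x ∈ Algebra.adjoin ℂ (({a, star a} : Set A) ∪ D) := by
  induction h with
  | single hx => exact Pset_subset_adjoin _ _ hx
  | cons hx _ ih => exact mul_mem (Pset_subset_adjoin _ _ hx) ih

lemma Chain.expect_eq_zero
    (hfree : FreeAmalg (D : Set A) E ![({a, star a} : Set A), ({b, star b} : Set A)])
    (ha : RDiagWithAmalg (D : Set A) E a) {s t : Option (Fin 2)} {x : A}
    (h : Chain (Pset (D : Set A) E a) (freePart D E b) s t x) : E x = 0 := by
  let C : Fin 2 → Set A := fun s =>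
    {x | x ∈ Algebra.adjoin ℂ (![({a, star a} : Set A), ({b, star b} : Set A)] s ∪ D) ∧ E x = 0}
  have hC : ∀ {s t x}, Alt C s t x → E x = 0 := fun {s t x} hx => by
    obtain ⟨n, σ, y, -, hy, hσ, rfl⟩ := hx.exists_ofFn
    exact hfree (n + 1) n.succ_pos σ y (fun k => (hy k).1) hσ (fun k => (hy k).2)
  have hR : ∀ i j x, Run (Pset (D : Set A) E a) i j x → x ∈ C 0 := fun i j x hx =>
    ⟨hx.mem_adjoin, hx.expect_eq_zero ha⟩
  have hY : freePart D E b ⊆ C 1 := fun y hy => hy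
  obtain ⟨h1, h2⟩ := h.collect hY hR
  cases s with
  | none => exact hC (h1 rfl).choose_spec
  | some i =>
    rcases h2 i rfl with ⟨j, hr⟩ | ⟨j, r, z, u, hr, hz, rfl⟩
    · exact hr.expect_eq_zero ha
    · exact hC (.cons (hR _ _ _ hr) (by decide) hz)

/-- The possible left labels of a chain representing a word in `a b` that starts with
`(a b)* = b* a*` (index `0`), or with `a b` (index `1`). -/
def StartOk (i : Fin 2) (s : Option (Fin 2)) : Prop := s = some i ∨ (i = 0 ∧ s = none)

/-- The possible right labels of a chain representing a word in `a b` that ends with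
`(a b)* = b* a*` (index `0`), or with `a b` (index `1`). -/
def EndOk (i : Fin 2) (t : Option (Fin 2)) : Prop := t = some i ∨ (i = 1 ∧ t = none)

lemma EndOk.link {i : Fin 2} {s t : Option (Fin 2)} (ht : EndOk i t) (hs : StartOk i s) :
    Link t s := by
  rcases ht with rfl | ⟨rfl, rfl⟩ <;> rcases hs with rfl | ⟨h, rfl⟩ <;> simp_all [Link]

/-- The span of the chains for `a` and `b` whose ends are those of a word in `a b` with given first
and last letters. -/
def chainSpan (D : StarSubalgebra ℂ A) (E : A →ₗ[ℂ] A) (a b : A) (i j : Fin 2) :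
    Submodule ℂ A :=
  Submodule.span ℂ {x | ∃ s t, StartOk i s ∧ EndOk j t ∧
    Chain (Pset (D : Set A) E a) (freePart D E b) s t x}

lemma chain_mem_chainSpan {i j : Fin 2} {s t : Option (Fin 2)} {x : A} (hs : StartOk i s)
    (ht : EndOk j t) (hx : Chain (Pset (D : Set A) E a) (freePart D E b) s t x) :
    x ∈ chainSpan D E a b i j :=
  Submodule.subset_span ⟨s, t, hs, ht, hx⟩

lemma chainSpan_mul {i j k : Fin 2} {x y : A} (hx : x ∈ chainSpan D E a b i j)
    (hy : y ∈ chainSpan D E a b j k) : x * y ∈ chainSpan D E a b i k := by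
  have h := Submodule.mul_mem_mul hx hy
  rw [chainSpan, chainSpan, Submodule.span_mul_span] at h
  refine Submodule.span_le.2 ?_ h
  rintro _ ⟨x, ⟨s, t, hs, ht, hx⟩, y, ⟨s', t', hs', ht', hy⟩, rfl⟩
  exact chain_mem_chainSpan hs ht' (hx.mul hy (ht.link hs'))

lemma chainSpan_expect_eq_zero
    (hfree : FreeAmalg (D : Set A) E ![({a, star a} : Set A), ({b, star b} : Set A)])
    (ha : RDiagWithAmalg (D : Set A) E a) {i j : Fin 2} {x : A}
    (hx : x ∈ chainSpan D E a b i j) : E x = 0 := by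
  suffices chainSpan D E a b i j ≤ LinearMap.ker E from this hx
  refine Submodule.span_le.2 ?_
  rintro x ⟨s, t, -, -, hx⟩
  exact hx.expect_eq_zero hfree ha

/-! ### Words in the product as combinations of chains -/

/-- The algebra of words `a* d a d' a* d'' a ⋯` (index `0`) and the algebra generated by `b`, `b*`
and `D` (index `1`), as subspaces. -/
def innerAlg (D : StarSubalgebra ℂ A) (a b : A) : Fin 2 → Submodule ℂ A :=
  ![V D a false 0, Subalgebra.toSubmodule (Algebra.adjoin ℂ (({b, star b} : Set A) ∪ D))]

lemma D_mem_innerAlg (s : Fin 2) (d : A) (hd : d ∈ D) : d ∈ innerAlg D a b s := by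
  fin_cases s
  · exact D_mem_V hd
  · exact Algebra.subset_adjoin (.inr hd)

lemma innerAlg_mul (s : Fin 2) (x : A) (hx : x ∈ innerAlg D a b s) (y : A)
    (hy : y ∈ innerAlg D a b s) : x * y ∈ innerAlg D a b s := by
  fin_cases s
  · exact V_even_mul_even hx hy
  · exact mul_mem (S := Subalgebra ℂ A) hx hy

lemma mul_mem_inner (hE : IsCondExp (D : Set A) E) (s : Fin 2) {u x : A}
    (hu : u ∈ innerAlg D a b s) (hx : x ∈ reduced D E (innerAlg D a b)) :
    u * x ∈ reduced D E (innerAlg D a b) :=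
  mul_mem_reduced hE D_mem_innerAlg innerAlg_mul hu hx

/-- A word `(a b)* d (a b) d' ⋯ (a b) d''` reduces to an inner element. -/
lemma word_even_false (hE : IsCondExp (D : Set A) E) (m : ℕ) {x : A}
    (hx : x ∈ wordSet (D : Set A) (a * b) (altList false (2 * m))) :
    x ∈ reduced D E (innerAlg D a b) := by
  induction m generalizing x with
  | zero => exact D_mem_reduced hx
  | succ m ih =>
    obtain ⟨d, hd, _, ⟨e, he, w, hw, rfl⟩, rfl⟩ := hx
    have hb : b ∈ innerAlg D a b 1 := Algebra.subset_adjoin (.inl (by simp))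
    have hb' : star b ∈ innerAlg D a b 1 := Algebra.subset_adjoin (.inl (by simp))
    have := mul_mem_inner hE 1 (D_mem_innerAlg 1 d hd) (mul_mem_inner hE 1 hb'
      (mul_mem_inner hE 0 (star_a_D_a_mem (a := a) he) (mul_mem_inner hE 1 hb (ih hw))))
    simpa [letter, mul_assoc] using this

lemma word_odd_false (hE : IsCondExp (D : Set A) E) (m : ℕ) {x : A}
    (hx : x ∈ wordSet (D : Set A) (a * b) (altList false (2 * m + 1))) :
    ∃ y ∈ reduced D E (innerAlg D a b), ∃ d ∈ D, x = y * (star a * d) := by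
  induction m generalizing x with
  | zero =>
    obtain ⟨d, hd, e, he, rfl⟩ := hx
    refine ⟨d * star b, ?_, e, he, by simp [letter, mul_assoc]⟩
    have hb' : star b ∈ innerAlg D a b 1 := Algebra.subset_adjoin (.inl (by simp))
    have := mul_mem_inner hE 1 (D_mem_innerAlg 1 d hd)
      (mul_mem_inner hE 1 hb' (D_mem_reduced (one_mem D)))
    rwa [mul_one] at this
  | succ m ih =>
    obtain ⟨d, hd, _, ⟨e, he, w, hw, rfl⟩, rfl⟩ := hx
    obtain ⟨y, hy, f, hf, rfl⟩ := ih hw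
    have hb : b ∈ innerAlg D a b 1 := Algebra.subset_adjoin (.inl (by simp))
    have hb' : star b ∈ innerAlg D a b 1 := Algebra.subset_adjoin (.inl (by simp))
    refine ⟨_, mul_mem_inner hE 1 (D_mem_innerAlg 1 d hd) (mul_mem_inner hE 1 hb'
      (mul_mem_inner hE 0 (star_a_D_a_mem (a := a) he) (mul_mem_inner hE 1 hb hy))), f, hf, ?_⟩
    simp [letter, mul_assoc]

lemma word_odd_true (hE : IsCondExp (D : Set A) E) (m : ℕ) {x : A}
    (hx : x ∈ wordSet (D : Set A) (a * b) (altList true (2 * m + 1))) :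
    ∃ d ∈ D, ∃ y ∈ reduced D E (innerAlg D a b), x = d * a * y := by
  obtain ⟨d, hd, w, hw, rfl⟩ := hx
  have hb : b ∈ innerAlg D a b 1 := Algebra.subset_adjoin (.inl (by simp))
  exact ⟨d, hd, _, mul_mem_inner hE 1 hb (word_even_false hE m hw), by simp [letter, mul_assoc]⟩

lemma word_even_true (hE : IsCondExp (D : Set A) E) (m : ℕ) {x : A}
    (hx : x ∈ wordSet (D : Set A) (a * b) (altList true (2 * m))) :
    x ∈ D ∨ ∃ d ∈ D, ∃ y ∈ reduced D E (innerAlg D a b), ∃ e ∈ D,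
      x = d * a * y * (star a * e) := by
  cases m with
  | zero => exact .inl hx
  | succ m =>
    obtain ⟨d, hd, w, hw, rfl⟩ := hx
    obtain ⟨y, hy, e, he, rfl⟩ := word_odd_false hE m hw
    have hb : b ∈ innerAlg D a b 1 := Algebra.subset_adjoin (.inl (by simp))
    exact .inr ⟨d, hd, _, mul_mem_inner hE 1 hb hy, e, he, by simp [letter, mul_assoc]⟩

/-- The left label of an inner factor: the words in `a` start with `a*`. -/
def lab : Fin 2 → Option (Fin 2) := ![some 0, none]

/-- The right label of an inner factor: the words in `a` end with `a`. -/
def lab' : Fin 2 → Option (Fin 2) := ![some 1, none]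

lemma startOk_lab (s : Fin 2) : StartOk 0 (lab s) := by fin_cases s <;> simp [StartOk, lab]
lemma endOk_lab (s : Fin 2) : EndOk 1 (lab' s) := by fin_cases s <;> simp [EndOk, lab']

lemma centred_zero {x : A} (hx : x ∈ centred E (innerAlg D a b) 0) :
    x ∈ Pset (D : Set A) E a 0 1 := hx

lemma centred_one {x : A} (hx : x ∈ centred E (innerAlg D a b) 1) : x ∈ freePart D E b := hx

lemma Alt.chain {s t : Fin 2} {x : A} (h : Alt (centred E (innerAlg D a b)) s t x) :
    Chain (Pset (D : Set A) E a) (freePart D E b) (lab s) (lab' t) x := by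
  induction h with
  | @single s x hx =>
    fin_cases s
    · exact .diag (centred_zero hx)
    · exact .free (centred_one hx)
  | @cons s s' t x z hx hs _ ih =>
    fin_cases s <;> fin_cases s' <;> try exact absurd rfl hs
    · exact .consDiag (j := 1) (s := none) (centred_zero hx) trivial ih
    · exact .consFree (centred_one hx) ih

lemma Alt.chain_mul {s t : Fin 2} {x e : A} (h : Alt (centred E (innerAlg D a b)) s t x)
    (he : e ∈ V D a false 1) :
    Chain (Pset (D : Set A) E a) (freePart D E b) (lab s) (some 0) (x * e) := by
  induction h with
  | @single s x hx =>
    fin_cases s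
    · exact .diag (i := 0) (j := 0) (V_even_mul_odd (centred_zero hx).1 he)
    · exact .consFree (i := 0) (centred_one hx) (.diag he)
  | @cons s s' t x z hx hs _ ih =>
    rw [mul_assoc]
    fin_cases s <;> fin_cases s' <;> try exact absurd rfl hs
    · exact .consDiag (j := 1) (s := none) (centred_zero hx) trivial ih
    · exact .consFree (centred_one hx) ih

lemma Alt.mul_chain {s t : Fin 2} {x e : A} (h : Alt (centred E (innerAlg D a b)) s t x)
    (he : e ∈ V D a true 1) :
    Chain (Pset (D : Set A) E a) (freePart D E b) (some 1) (lab' t) (e * x) := by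
  have he' : e ∈ Pset (D : Set A) E a 1 1 := he
  cases h with
  | @single s x hx =>
    fin_cases s
    · exact .diag (i := 1) (j := 1) (V_odd_mul_even he (centred_zero hx).1)
    · exact .consDiag (j := 1) (s := none) he' trivial (.free (centred_one hx))
  | @cons s s' t x z hx hs hz =>
    fin_cases s <;> fin_cases s' <;> try exact absurd rfl hs
    · rw [← mul_assoc]
      have : e * x ∈ Pset (D : Set A) E a 1 1 :=
        V_odd_mul_even he (centred_zero hx).1
      exact .consDiag (j := 1) (s := none) this trivial hz.chain
    · exact .consDiag (j := 1) (s := none) he' trivial (Alt.chain (s := 1) (.cons hx hs hz))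

/-- With an `a` on the left and an `a*` on the right, an alternating product either is a single
element of `G`, which gives a word in `a` alone, or it contains a factor from the free algebra, so
that it gives a chain. -/
lemma Alt.mul_chain_mul {s t : Fin 2} {x e f : A}
    (h : Alt (centred E (innerAlg D a b)) s t x) (he : e ∈ V D a true 1)
    (hf : f ∈ V D a false 1) :
    e * x * f ∈ V D a true 0 ∨
      Chain (Pset (D : Set A) E a) (freePart D E b) (some 1) (some 0) (e * x * f) := by
  have he' : e ∈ Pset (D : Set A) E a 1 1 := he
  cases h with
  | @single s x hx =>
    fin_cases s
    · exact .inl (V_odd_mul_odd (V_odd_mul_even he (centred_zero hx).1) hf)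
    · rw [mul_assoc]
      exact .inr (.consDiag (j := 1) (s := none) he' trivial (Alt.chain_mul (s := 1) (.single hx) hf))
  | @cons s s' t x z hx hs hz =>
    right
    fin_cases s <;> fin_cases s' <;> try exact absurd rfl hs
    · rw [← mul_assoc, mul_assoc]
      have : e * x ∈ Pset (D : Set A) E a 1 1 :=
        V_odd_mul_even he (centred_zero hx).1
      exact .consDiag (j := 1) (s := none) this trivial (hz.chain_mul hf)
    · rw [mul_assoc]
      exact .consDiag (j := 1) (s := none) he' trivial (Alt.chain_mul (s := 1) (.cons hx hs hz) hf)

/-- The elements of the space `P i j` of `a b` are combinations of chains with admissible ends: a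
word in `a b` is a reduced inner element, multiplied by `d a` if it starts with `a b` and by `a* d`
if it ends with `(a b)*`. -/
lemma pset_mul_le (hE : IsCondExp (D : Set A) E)
    (hfree : FreeAmalg (D : Set A) E ![({a, star a} : Set A), ({b, star b} : Set A)])
    (ha : RDiagWithAmalg (D : Set A) E a) (i j : Fin 2) :
    Pset (D : Set A) E (a * b) i j ⊆ chainSpan D E a b i j := by
  fin_cases i <;> fin_cases j
  · change (V D (a * b) false 1 : Set A) ⊆ _
    refine SetLike.coe_subset_coe.2 (Submodule.span_le.2 (Set.iUnion_subset fun m x hx => ?_))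
    obtain ⟨y, hy, d, hd, rfl⟩ := word_odd_false hE m hx
    suffices reduced D E (innerAlg D a b) ≤
      (chainSpan D E a b 0 0).comap (LinearMap.mulRight ℂ (star a * d)) from this hy
    refine sup_le (fun c hc => ?_) (Submodule.span_le.2 ?_)
    · exact chain_mem_chainSpan (.inl rfl) (.inl rfl) (.diag (i := 0) (j := 0)
        (V_even_mul_odd (D_mem_V hc) (star_a_mul_D_mem hd)))
    · rintro z ⟨s, t, hz⟩
      exact chain_mem_chainSpan (startOk_lab s) (.inl rfl) (hz.chain_mul (star_a_mul_D_mem hd))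
  · rintro x ⟨hx, hx0⟩
    have hx' : x ∈ reduced D E (innerAlg D a b) :=
      Submodule.span_le.2 (Set.iUnion_subset fun m x hx => word_even_false hE m hx) hx
    obtain ⟨d, hd, z, hz, rfl⟩ := Submodule.mem_sup.1 hx'
    have hz' : z ∈ chainSpan D E a b 0 1 := by
      refine Submodule.span_le.2 ?_ hz
      rintro z ⟨s, t, hz⟩
      exact chain_mem_chainSpan (startOk_lab s) (endOk_lab t) hz.chain
    -- The alternating part is centred, so that the `D`-part is the expectation, which vanishes.
    rw [map_add, chainSpan_expect_eq_zero hfree ha hz', add_zero, E_of_mem hE hd] at hx0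
    rw [hx0, zero_add]
    exact hz'
  · rintro x ⟨hx, hx0⟩
    -- Single words need not be centred, so linearity is applied to `x ↦ x - E x`.
    suffices h : x - E x ∈ chainSpan D E a b 1 0 by rwa [hx0, sub_zero] at h
    suffices Submodule.span ℂ (⋃ m : ℕ, wordSet (D : Set A) (a * b) (altList true (2 * m))) ≤
      (chainSpan D E a b 1 0).comap (LinearMap.id - E) from this hx
    have hV : ∀ w ∈ V D a true 0, w - E w ∈ chainSpan D E a b 1 0 := fun w hw =>
      chain_mem_chainSpan (.inl rfl) (.inl rfl) (.diag (i := 1) (j := 0)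
        ⟨sub_mem hw (D_mem_V (hE.2.1 w)), E_sub hE w⟩)
    refine Submodule.span_le.2 (Set.iUnion_subset fun m w hw => ?_)
    change w - E w ∈ chainSpan D E a b 1 0
    rcases word_even_true hE m hw with hw | ⟨d, hd, y, hy, e, he, rfl⟩
    · rw [E_of_mem hE hw, sub_self]
      exact (chainSpan D E a b 1 0).zero_mem
    · suffices reduced D E (innerAlg D a b) ≤ ((chainSpan D E a b 1 0).comap
          (LinearMap.id - E)).comap (LinearMap.mulLeft ℂ (d * a) ∘ₗ
            LinearMap.mulRight ℂ (star a * e)) by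
        simpa [mul_assoc] using this hy
      refine sup_le (fun c hc => ?_) (Submodule.span_le.2 ?_)
      · refine hV _ (V_odd_mul_odd (D_mul_a_mem hd) ?_)
        exact V_even_mul_odd (D_mem_V hc) (star_a_mul_D_mem he)
      · rintro z ⟨s, t, hz⟩
        change d * a * (z * (star a * e)) - E (d * a * (z * (star a * e))) ∈
          chainSpan D E a b 1 0
        rw [← mul_assoc (d * a)]
        rcases hz.mul_chain_mul (D_mul_a_mem hd) (star_a_mul_D_mem he) with h | h
        · exact hV _ h
        · rw [h.expect_eq_zero hfree ha, sub_zero]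
          exact chain_mem_chainSpan (.inl rfl) (.inl rfl) h
  · change (V D (a * b) true 1 : Set A) ⊆ _
    refine SetLike.coe_subset_coe.2 (Submodule.span_le.2 (Set.iUnion_subset fun m x hx => ?_))
    obtain ⟨d, hd, y, hy, rfl⟩ := word_odd_true hE m hx
    suffices reduced D E (innerAlg D a b) ≤
      (chainSpan D E a b 1 1).comap (LinearMap.mulLeft ℂ (d * a)) from this hy
    refine sup_le (fun c hc => ?_) (Submodule.span_le.2 ?_)
    · exact chain_mem_chainSpan (.inl rfl) (.inl rfl) (.diag (i := 1) (j := 1)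
        (V_odd_mul_even (D_mul_a_mem hd) (D_mem_V hc)))
    · rintro z ⟨s, t, hz⟩
      exact chain_mem_chainSpan (.inl rfl) (endOk_lab t) (hz.mul_chain (D_mul_a_mem hd))

lemma prod_mem_chainSpan (n : ℕ) (i : Fin (n + 2) → Fin 2) (x : Fin (n + 1) → A)
    (h : ∀ k, x k ∈ chainSpan D E a b (i k.castSucc) (i k.succ)) :
    (List.ofFn x).prod ∈ chainSpan D E a b (i 0) (i (Fin.last _)) := by
  induction n with
  | zero => simpa using h 0
  | succ n ih =>
    rw [List.ofFn_succ, List.prod_cons]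
    exact chainSpan_mul (h 0) (ih (fun k => i k.succ) (fun k => x k.succ) fun k => h k.succ)

lemma rDiag_mul (hE : IsCondExp (D : Set A) E)
    (hfree : FreeAmalg (D : Set A) E ![({a, star a} : Set A), ({b, star b} : Set A)])
    (ha : RDiagWithAmalg (D : Set A) E a) : RDiagWithAmalg (D : Set A) E (a * b) := by
  intro n hn i x hx
  obtain ⟨n, rfl⟩ : ∃ k, n = k + 1 := ⟨n - 1, by omega⟩
  exact chainSpan_expect_eq_zero hfree ha
    (prod_mem_chainSpan n i x fun k => pset_mul_le hE hfree ha _ _ (hx k))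

/-! ### Invariance under the adjoint -/

lemma wordSet_star (l : List Bool) :
    wordSet (D : Set A) (star a) l = wordSet (D : Set A) a (l.map not) := by
  induction l with
  | nil => rfl
  | cons c l ih => cases c <;> simp [wordSet, ih, letter]

lemma altList_map_not (c : Bool) (n : ℕ) : (altList c n).map not = altList (!c) n := by
  induction n generalizing c with
  | zero => rfl
  | succ n ih => simp [altList, ih]

lemma Pset_star (i j : Fin 2) :
    Pset (D : Set A) E (star a) i j = Pset (D : Set A) E a (1 - i) (1 - j) := by
  fin_cases i <;> fin_cases j <;> simp [Pset, wordSet_star, altList_map_not]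

lemma RDiagWithAmalg.star (ha : RDiagWithAmalg (D : Set A) E a) :
    RDiagWithAmalg (D : Set A) E (star a) := by
  intro n hn i x hx
  refine ha n hn (fun k => 1 - i k) x fun k => ?_
  rw [← Pset_star]
  exact hx k

end Expectation

end RDiagMul

/-- If `{a, a*}` and `{b, b*}` are free with amalgamation over `D` and `a` is
`R`-diagonal with amalgamation over `D`, then both `ab` and `ba` are `R`-diagonal with
amalgamation over `D`. -/
theorem rDiagonal_with_amalgamation_mul
    {A : Type*} [Ring A] [Algebra ℂ A] [StarRing A] [StarModule ℂ A]
    (D : StarSubalgebra ℂ A) (E : A →ₗ[ℂ] A) (hE : IsCondExp (D : Set A) E)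
    (a b : A)
    (hfree : FreeAmalg (D : Set A) E ![({a, star a} : Set A), ({b, star b} : Set A)])
    (ha : RDiagWithAmalg (D : Set A) E a) :
    RDiagWithAmalg (D : Set A) E (a * b) ∧ RDiagWithAmalg (D : Set A) E (b * a) := by
  refine ⟨RDiagMul.rDiag_mul hE hfree ha, ?_⟩
  have h := RDiagMul.rDiag_mul (a := star a) (b := star b) hE ?_
    (RDiagMul.RDiagWithAmalg.star ha)
  · simpa using RDiagMul.RDiagWithAmalg.star h
  · simpa [Set.pair_comm] using hfree
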